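/- Let A₁, A₂, A₃ be hermitian 4×4 complex matrices whose joint numerical range W = W(A₁,A₂,A₃) has dimension 3. If W has three mutually distinct triangular faces, then W is a tetrahedron, i.e., W is the convex hull of four affinely independent points of ℝ³. -/

import Mathlib

open Matrix ComplexOrder

noncomputable section

/-- A density matrix: positive semidefinite with unit trace. -/
def IsDensity {n : Type*} [Fintype n] (ρ : Matrix n n ℂ) : Prop :=
  ρ.PosSemidef ∧ ρ.trace = 1

/-- The measurement map `ρ ↦ (tr ρA₁, …, tr ρA_k)` (the traces are real for
hermitian matrices). -/
def wpt {n : Type*} [Fintype n] {k : ℕ} (A : Fin k → Matrix n n ℂ)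
    (ρ : Matrix n n ℂ) : Fin k → ℝ :=
  fun i => ((ρ * A i).trace).re

/-- The joint numerical range of `k` matrices. -/
def JNR {n : Type*} [Fintype n] {k : ℕ} (A : Fin k → Matrix n n ℂ) :
    Set (Fin k → ℝ) :=
  wpt A '' {ρ | IsDensity ρ}

/-- `F` is a face of the convex set `C`: a convex subset such that whenever an
open segment between two points of `C` meets `F`, both endpoints lie in `F`. -/
def IsFaceOf {E : Type*} [AddCommGroup E] [Module ℝ E] (C F : Set E) : Prop :=
  Convex ℝ F ∧ IsExtreme ℝ C F

/-- The dimension of a convex set: the dimension of its affine hull. -/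
def convDim {E : Type*} [AddCommGroup E] [Module ℝ E] (F : Set E) : ℕ :=
  Module.finrank ℝ (affineSpan ℝ F).direction

/-- Euclidean dot product on `Fin d → ℝ`. -/
def dotR {d : ℕ} (u v : Fin d → ℝ) : ℝ := ∑ i, u i * v i

/-- `F` is an exposed face of `C`: the set of minimizers of a linear functional. -/
def IsExposedFace {d : ℕ} (C F : Set (Fin d → ℝ)) : Prop :=
  ∃ u : Fin d → ℝ, F = {x ∈ C | ∀ y ∈ C, dotR u x ≤ dotR u y}

/-- The normal cone of `C` at `p`. -/
def normalConeAt {d : ℕ} (C : Set (Fin d → ℝ)) (p : Fin d → ℝ) :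
    Set (Fin d → ℝ) :=
  {u | ∀ y ∈ C, 0 ≤ dotR (y - p) u}

/-- `p` is a corner point of `C` if the normal cone of `C` at `p` spans `ℝ^d`. -/
def IsCornerPoint {d : ℕ} (C : Set (Fin d → ℝ)) (p : Fin d → ℝ) : Prop :=
  p ∈ C ∧ Submodule.span ℝ (normalConeAt C p) = ⊤

/-- The closed unit disk of `ℝ²`. -/
def unitDisk2 : Set (Fin 2 → ℝ) := {v | v 0 ^ 2 + v 1 ^ 2 ≤ 1}

/-- An elliptic disk in `ℝ³`: the image of the closed unit disk of `ℝ²` under an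
injective affine map. -/
def IsEllipticDisk (F : Set (Fin 3 → ℝ)) : Prop :=
  ∃ f : (Fin 2 → ℝ) →ᵃ[ℝ] (Fin 3 → ℝ), Function.Injective f ∧ F = f '' unitDisk2

/-- A non-elliptic face of `W`: a two-dimensional face that is not an elliptic
disk. -/
def IsNonEllipticFace (W F : Set (Fin 3 → ℝ)) : Prop :=
  IsFaceOf W F ∧ convDim F = 2 ∧ ¬ IsEllipticDisk F

/-- A rank-3 face of the joint numerical range of `A`. -/
def IsRank3Face {k : ℕ} (A : Fin k → Matrix (Fin 4) (Fin 4) ℂ)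
    (F : Set (Fin k → ℝ)) : Prop :=
  F.Nonempty ∧ IsFaceOf (JNR A) F ∧
    ∃ P : Matrix (Fin 4) (Fin 4) ℂ, Pᴴ = P ∧ P * P = P ∧ P.rank = 3 ∧
      ∀ ρ : Matrix (Fin 4) (Fin 4) ℂ, IsDensity ρ → (wpt A ρ ∈ F ↔ P * ρ * P = ρ)

/-- A triangular face: a face that is the convex hull of three affinely
independent points. -/
def IsTriangularFace (W F : Set (Fin 3 → ℝ)) : Prop :=
  IsFaceOf W F ∧ ∃ x y z : Fin 3 → ℝ, AffineIndependent ℝ ![x, y, z] ∧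
    F = convexHull ℝ {x, y, z}

open Finset in
lemma ext_sum {E : Type*} [AddCommGroup E] [Module ℝ E] {W F : Set E} (hW : Convex ℝ W)
    (hF : IsExtreme ℝ W F) {ι : Type*} (s : Finset ι) (t : ι → ℝ) (p : ι → E)
    (ht : ∀ i ∈ s, 0 ≤ t i) (hp : ∀ i ∈ s, 0 < t i → p i ∈ W) {g : E} (hg : g ∈ F)
    (hsum : ∑ i ∈ s, t i • p i = (∑ i ∈ s, t i) • g) {k : ι} (hk : k ∈ s) (hk0 : 0 < t k) :
    p k ∈ F := by
  classical
  have e1 : ∑ i ∈ s, t i = t k + ∑ i ∈ s.erase k, t i := (Finset.add_sum_erase s t hk).symm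
  have e2 : ∑ i ∈ s, t i • p i = t k • p k + ∑ i ∈ s.erase k, t i • p i :=
    (Finset.add_sum_erase s (fun i => t i • p i) hk).symm
  have hR0 : 0 ≤ ∑ i ∈ s.erase k, t i :=
    Finset.sum_nonneg fun i hi => ht i (Finset.mem_of_mem_erase hi)
  set R := ∑ i ∈ s.erase k, t i with hR
  rcases hR0.eq_or_lt with h0 | hpos
  · have hz : ∀ i ∈ s.erase k, t i = 0 :=
      (Finset.sum_eq_zero_iff_of_nonneg fun i hi => ht i (Finset.mem_of_mem_erase hi)).1 h0.symm
    have : ∑ i ∈ s.erase k, t i • p i = 0 :=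
      Finset.sum_eq_zero fun i hi => by rw [hz i hi, zero_smul]
    rw [e1, e2, this, ← h0, add_zero, add_zero] at hsum
    have : p k = g := smul_right_injective E hk0.ne' hsum
    rwa [this]
  · have hr : (∑ i ∈ (s.erase k).filter (fun i => 0 < t i), (R⁻¹ * t i) • p i) ∈ W := by
      apply hW.sum_mem
      · intro i hi
        have := (Finset.mem_filter.1 hi).2
        positivity
      · rw [← Finset.mul_sum, Finset.sum_filter_of_ne, inv_mul_cancel₀ hpos.ne']
        intro i hi h
        exact lt_of_le_of_ne (ht i (Finset.mem_of_mem_erase hi)) (Ne.symm h)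
      · intro i hi
        have := Finset.mem_filter.1 hi
        exact hp i (Finset.mem_of_mem_erase this.1) this.2
    have hr2 : (∑ i ∈ (s.erase k).filter (fun i => 0 < t i), (R⁻¹ * t i) • p i)
        = R⁻¹ • ∑ i ∈ s.erase k, t i • p i := by
      rw [Finset.smul_sum, Finset.sum_filter_of_ne]
      · exact Finset.sum_congr rfl fun i _ => mul_smul _ _ _
      · intro i hi h
        refine lt_of_le_of_ne (ht i (Finset.mem_of_mem_erase hi)) ?_
        rintro h'
        rw [← h'] at h
        simp at h
    rw [hr2] at hr
    refine hF.left_mem_of_mem_openSegment (hp k hk hk0) hr hg ?_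
    refine ⟨t k / (t k + R), R / (t k + R), by positivity, by positivity, by field_simp, ?_⟩
    rw [e1, e2] at hsum
    have : g = (t k + R)⁻¹ • (t k • p k + ∑ i ∈ s.erase k, t i • p i) := by
      rw [hsum, smul_smul, inv_mul_cancel₀ (by positivity), one_smul]
    rw [this, smul_add, smul_smul, smul_smul]
    congr 2
    · rw [div_eq_inv_mul]
    · field_simp

/-- Affine independence of a finset of points. -/
def AI {E : Type*} [AddCommGroup E] [Module ℝ E] (X : Finset E) : Prop :=
  ∀ w : E → ℝ, ∑ x ∈ X, w x = 0 → ∑ x ∈ X, w x • x = 0 → ∀ x ∈ X, w x = 0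

lemma ext_sub {E : Type*} [AddCommGroup E] [Module ℝ E] {W : Set E} {X Y : Finset E}
    (hX : AI X) (hF : IsExtreme ℝ W (convexHull ℝ (X : Set E))) (hYX : Y ⊆ X) :
    IsExtreme ℝ W (convexHull ℝ (Y : Set E)) := by
  classical
  refine hF.trans ⟨convexHull_mono (by exact_mod_cast hYX), ?_⟩
  intro p hp q hq g hg ⟨a, b, ha, hb, hab, hpq⟩
  rw [Finset.mem_convexHull'] at hp hq hg
  obtain ⟨wp, hp0, hp1, hp2⟩ := hp
  obtain ⟨wq, hq0, hq1, hq2⟩ := hq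
  obtain ⟨wg, hg0, hg1, hg2⟩ := hg
  have key := hX (fun x => a * wp x + b * wq x - if x ∈ Y then wg x else 0)
    (by
      rw [Finset.sum_sub_distrib, Finset.sum_add_distrib, ← Finset.mul_sum, ← Finset.mul_sum, hp1,
        hq1, ← Finset.sum_filter, Finset.filter_mem_eq_inter, Finset.inter_eq_right.2 hYX, hg1]
      linarith)
    (by
      simp only [sub_smul, add_smul, mul_smul, ite_smul, zero_smul]
      rw [Finset.sum_sub_distrib, Finset.sum_add_distrib, ← Finset.smul_sum, ← Finset.smul_sum, hp2,
        hq2, ← Finset.sum_filter, Finset.filter_mem_eq_inter, Finset.inter_eq_right.2 hYX, hg2, hpq,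
        sub_self])
  have hz : ∀ x ∈ X, x ∉ Y → wp x = 0 := by
    intro x hx hxY
    have := key x hx
    simp only [hxY, if_false, sub_zero] at this
    have h1 := mul_nonneg ha.le (hp0 x hx)
    have h2 := mul_nonneg hb.le (hq0 x hx)
    have : a * wp x = 0 := by linarith
    exact (mul_eq_zero.1 this).resolve_left ha.ne'
  rw [Finset.mem_convexHull']
  refine ⟨wp, fun y hy => hp0 y (hYX hy), ?_, ?_⟩
  · rw [← hp1]
    exact Finset.sum_subset hYX fun x hx hxY => hz x hx hxY
  · rw [← hp2]
    exact Finset.sum_subset hYX fun x hx hxY => by rw [hz x hx hxY, zero_smul]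

abbrev Vec := Fin 4 → ℂ

/-- sesquilinear form -/
def bf (M : Matrix (Fin 4) (Fin 4) ℂ) (u v : Vec) : ℂ := star u ⬝ᵥ (M *ᵥ v)

def qf (A : Fin 3 → Matrix (Fin 4) (Fin 4) ℂ) (v : Vec) : Fin 3 → ℝ := fun i => (bf (A i) v v).re

def nf (v : Vec) : ℝ := (bf 1 v v).re

lemma bf_add_left (M) (u u' v : Vec) : bf M (u + u') v = bf M u v + bf M u' v := by
  simp [bf, add_dotProduct]
lemma bf_add_right (M) (u v v' : Vec) : bf M u (v + v') = bf M u v + bf M u v' := by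
  simp [bf, mulVec_add, dotProduct_add]
lemma bf_smul_left (M) (a : ℂ) (u v : Vec) : bf M (a • u) v = star a * bf M u v := by
  simp [bf, smul_dotProduct]
lemma bf_smul_right (M) (a : ℂ) (u v : Vec) : bf M u (a • v) = a * bf M u v := by
  simp [bf, mulVec_smul, dotProduct_smul]
lemma bf_sum_left {ι : Type*} (s : Finset ι) (M) (u : ι → Vec) (v : Vec) :
    bf M (∑ i ∈ s, u i) v = ∑ i ∈ s, bf M (u i) v := by
  simp [bf, star_sum, sum_dotProduct]
lemma bf_sum_right {ι : Type*} (s : Finset ι) (M) (u : Vec) (v : ι → Vec) :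
    bf M u (∑ i ∈ s, v i) = ∑ i ∈ s, bf M u (v i) := by
  simp [bf, mulVec_sum, dotProduct_sum]
lemma bf_herm {M : Matrix (Fin 4) (Fin 4) ℂ} (hM : M.IsHermitian) (u v : Vec) :
    bf M v u = star (bf M u v) := by
  rw [bf, bf, star_dotProduct, star_mulVec, hM.eq, dotProduct_mulVec]
lemma bf_self_real {M : Matrix (Fin 4) (Fin 4) ℂ} (hM : M.IsHermitian) (u : Vec) :
    bf M u u = ((bf M u u).re : ℂ) := by
  have := hM.im_star_dotProduct_mulVec_self u
  apply Complex.ext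
  · simp
  · simpa [bf] using this

lemma nf_eq_sum (v : Vec) : nf v = ∑ i, ‖v i‖ ^ 2 := by
  simp [nf, bf, dotProduct, Complex.sq_norm, Complex.normSq_apply]

lemma nf_nonneg (v : Vec) : 0 ≤ nf v := by
  rw [nf_eq_sum]; positivity

lemma nf_eq_zero {v : Vec} (h : nf v = 0) : v = 0 := by
  rw [nf_eq_sum, Finset.sum_eq_zero_iff_of_nonneg (fun _ _ => by positivity)] at h
  ext i
  simpa using h i (Finset.mem_univ _)

lemma qf_mem (A : Fin 3 → Matrix (Fin 4) (Fin 4) ℂ) {v : Vec} (hv : nf v = 1) :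
    qf A v ∈ JNR A := by
  refine ⟨vecMulVec v (star v), ⟨posSemidef_vecMulVec_self_star v, ?_⟩, ?_⟩
  · rw [trace_vecMulVec, dotProduct_comm]
    have := bf_self_real (M := 1) isHermitian_one v
    rw [show (bf 1 v v).re = nf v from rfl, hv] at this
    simpa [bf] using this
  · ext i
    simp only [wpt, qf, bf]
    rw [vecMulVec_mul, trace_vecMulVec, dotProduct_comm, dotProduct_mulVec]

lemma qf_smul (A : Fin 3 → Matrix (Fin 4) (Fin 4) ℂ) (r : ℝ) (v : Vec) :
    qf A ((r : ℂ) • v) = (r ^ 2) • qf A v := by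
  ext i
  simp only [qf, bf_smul_left, bf_smul_right, Pi.smul_apply]
  simp
  ring

lemma nf_smul (r : ℝ) (v : Vec) : nf ((r : ℂ) • v) = (r ^ 2) * nf v := by
  simp only [nf, bf_smul_left, bf_smul_right]
  simp
  ring

lemma qf_mem' (A : Fin 3 → Matrix (Fin 4) (Fin 4) ℂ) {v : Vec} (hv : 0 < nf v) :
    (nf v)⁻¹ • qf A v ∈ JNR A := by
  have h : ((Real.sqrt (nf v))⁻¹) ^ 2 = (nf v)⁻¹ := by
    rw [inv_pow, Real.sq_sqrt hv.le]
  have := qf_mem A (v := (((Real.sqrt (nf v))⁻¹ : ℝ) : ℂ) • v)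
    (by rw [nf_smul, h, inv_mul_cancel₀ hv.ne'])
  rwa [qf_smul, h] at this

lemma JNR_convex (A : Fin 3 → Matrix (Fin 4) (Fin 4) ℂ) : Convex ℝ (JNR A) := by
  rintro _ ⟨ρ, ⟨h1, h2⟩, rfl⟩ _ ⟨σ, ⟨h3, h4⟩, rfl⟩ a b ha hb hab
  refine ⟨(a : ℂ) • ρ + (b : ℂ) • σ, ⟨(h1.smul (by exact_mod_cast ha)).add
    (h3.smul (by exact_mod_cast hb)), ?_⟩, ?_⟩
  · rw [trace_add, trace_smul, trace_smul, h2, h4]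
    simp only [smul_eq_mul, mul_one]
    exact_mod_cast hab
  · ext i
    simp [wpt, add_mul, trace_add, trace_smul]

lemma JNR_decomp (A : Fin 3 → Matrix (Fin 4) (Fin 4) ℂ) {p} (hp : p ∈ JNR A) :
    ∃ b : Fin 4 → Vec, ∑ k, nf (b k) = 1 ∧ ∑ k, qf A (b k) = p := by
  obtain ⟨ρ, ⟨h1, h2⟩, rfl⟩ := hp
  obtain ⟨B, rfl⟩ : ∃ B : Matrix (Fin 4) (Fin 4) ℂ, ρ = Bᴴ * B := by
    open scoped MatrixOrder in
    exact CStarAlgebra.nonneg_iff_eq_star_mul_self.1 h1.nonneg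
  have key : ∀ M, (Bᴴ * B * M).trace = ∑ k, bf M (star (B k)) (star (B k)) := by
    intro M
    rw [mul_assoc, trace_mul_comm]
    simp [bf, trace, mul_apply, dotProduct, mulVec, Finset.mul_sum, Finset.sum_mul]
    refine Finset.sum_congr rfl fun k _ => ?_
    rw [Finset.sum_comm]
    simp [mul_assoc]
  refine ⟨fun k => star (B k), ?_, ?_⟩
  · have := key 1
    rw [mul_one, h2] at this
    have := congrArg Complex.re this
    simpa [nf] using this.symm
  · ext i
    simp [wpt, key, qf]
lemma nf_smul_qf (A : Fin 3 → Matrix (Fin 4) (Fin 4) ℂ) (v : Vec) :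
    nf v • ((nf v)⁻¹ • qf A v) = qf A v := by
  by_cases h : nf v = 0
  · have := nf_eq_zero h
    subst this
    ext i
    simp [qf, bf, h]
  · rw [smul_smul, mul_inv_cancel₀ h, one_smul]

/-- If a sum of pure states lies in a face, so does every summand. -/
lemma pure_mem {A : Fin 3 → Matrix (Fin 4) (Fin 4) ℂ} {F : Set (Fin 3 → ℝ)}
    (hF : IsExtreme ℝ (JNR A) F) {ι : Type*} (s : Finset ι) (b : ι → Vec) {g} (hg : g ∈ F)
    (h : ∑ k ∈ s, qf A (b k) = (∑ k ∈ s, nf (b k)) • g) {k} (hk : k ∈ s) (hk0 : 0 < nf (b k)) :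
    (nf (b k))⁻¹ • qf A (b k) ∈ F := by
  refine ext_sum (JNR_convex A) hF s (fun k => nf (b k)) (fun k => (nf (b k))⁻¹ • qf A (b k))
    (fun i _ => nf_nonneg _) (fun i _ h => qf_mem' A h) hg ?_ hk hk0
  simpa only [nf_smul_qf] using h

lemma exists_pure {A : Fin 3 → Matrix (Fin 4) (Fin 4) ℂ} {x : Fin 3 → ℝ}
    (hx : IsExtreme ℝ (JNR A) {x}) : ∃ e : Vec, nf e = 1 ∧ qf A e = x := by
  obtain ⟨b, hb1, hb2⟩ := JNR_decomp A (hx.subset rfl)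
  obtain ⟨k, -, hk⟩ : ∃ k ∈ Finset.univ, 0 < nf (b k) := by
    apply Finset.exists_lt_of_sum_lt
    rw [hb1]; simp
  have := pure_mem hx Finset.univ b (g := x) rfl (by rw [hb1, hb2, one_smul]) (Finset.mem_univ k) hk
  have h : ((Real.sqrt (nf (b k)))⁻¹) ^ 2 = (nf (b k))⁻¹ := by
    rw [inv_pow, Real.sq_sqrt hk.le]
  refine ⟨(((Real.sqrt (nf (b k)))⁻¹ : ℝ) : ℂ) • b k, ?_, ?_⟩
  · rw [nf_smul, h, inv_mul_cancel₀ hk.ne']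
  · rw [qf_smul, h]; exact this

lemma bf_expand {M : Matrix (Fin 4) (Fin 4) ℂ} (hM : M.IsHermitian) (a b : ℂ) (e f : Vec) :
    (bf M (a • e + b • f) (a • e + b • f)).re = Complex.normSq a * (bf M e e).re
      + Complex.normSq b * (bf M f f).re + 2 * (star a * b * bf M e f).re := by
  simp only [bf_add_left, bf_add_right, bf_smul_left, bf_smul_right, bf_herm hM e f]
  rw [bf_self_real hM e, bf_self_real hM f]
  simp [Complex.normSq_apply]
  ring

lemma cross_zero {γ : ℂ} (h : ∀ a b : ℂ, 0 ≤ Complex.normSq b + 2 * (star a * b * γ).re) :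
    γ = 0 := by
  by_contra h0
  have hp := Complex.normSq_pos.2 h0
  have := h (-(((Complex.normSq γ)⁻¹ : ℝ) : ℂ) * γ) 1
  have e : (star (-(((Complex.normSq γ)⁻¹ : ℝ) : ℂ) * γ) * 1 * γ) = ((-1 : ℝ) : ℂ) := by
    have h2 : star γ * γ = (Complex.normSq γ : ℂ) := by
      rw [Complex.normSq_eq_conj_mul_self]; rfl
    have h3 : (Complex.normSq γ : ℂ) ≠ 0 := by exact_mod_cast hp.ne'
    rw [star_mul, mul_one, mul_right_comm, h2]
    simp
    field_simp
  rw [e, Complex.ofReal_re] at this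
  norm_num at this

def Tri (A : Fin 3 → Matrix (Fin 4) (Fin 4) ℂ) (X : Finset (Fin 3 → ℝ)) : Prop :=
  X.card = 3 ∧ AI X ∧ IsExtreme ℝ (JNR A) (convexHull ℝ (X : Set (Fin 3 → ℝ)))

lemma Tri.single {A X} (h : Tri A X) {x} (hx : x ∈ X) : IsExtreme ℝ (JNR A) {x} := by
  have := ext_sub h.2.1 h.2.2 (Finset.singleton_subset_iff.2 hx)
  simpa using this

lemma decouple {A : Fin 3 → Matrix (Fin 4) (Fin 4) ℂ} (hA : ∀ i, (A i).IsHermitian) {X}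
    (hX : Tri A X) {x y : Fin 3 → ℝ} (hx : x ∈ X) (hy : y ∈ X) (hxy : x ≠ y) {e f : Vec}
    (he : nf e = 1) (hf : nf f = 1) (hex : qf A e = x) (hfy : qf A f = y) :
    bf 1 e f = 0 ∧ ∀ i, bf (A i) e f = 0 := by
  have hseg : IsExtreme ℝ (JNR A) (segment ℝ x y) := by
    have := ext_sub hX.2.1 hX.2.2 (Y := {x, y})
      (by intro z hz; simp at hz; rcases hz with rfl | rfl <;> assumption)
    simpa [convexHull_pair] using this
  have hQ : ∀ i a b, qf A (a • e + b • f) i = Complex.normSq a * x i + Complex.normSq b * y i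
      + 2 * (star a * b * bf (A i) e f).re := by
    intro i a b
    rw [← hex, ← hfy]
    exact bf_expand (hA i) a b e f
  have hN : ∀ a b, nf (a • e + b • f) = Complex.normSq a + Complex.normSq b
      + 2 * (star a * b * bf 1 e f).re := by
    intro a b
    have := bf_expand (M := 1) isHermitian_one a b e f
    rw [show (bf 1 e e).re = nf e from rfl, show (bf 1 f f).re = nf f from rfl, he, hf, mul_one, mul_one] at this
    exact this
  have key : ∀ a b : ℂ, ∃ s t : ℝ, 0 ≤ s ∧ 0 ≤ t ∧ nf (a • e + b • f) = s + t ∧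
      qf A (a • e + b • f) = s • x + t • y := by
    intro a b
    rcases (nf_nonneg (a • e + b • f)).eq_or_lt with h0 | hpos
    · refine ⟨0, 0, le_rfl, le_rfl, by simp [← h0], ?_⟩
      rw [nf_eq_zero h0.symm]
      ext i; simp [qf, bf]
    · have hpos2 : 0 < Complex.normSq a + Complex.normSq b := by
        by_contra hc
        have h1 := Complex.normSq_nonneg a
        have h2 := Complex.normSq_nonneg b
        have ha : a = 0 := Complex.normSq_eq_zero.1 (by linarith)
        have hb : b = 0 := Complex.normSq_eq_zero.1 (by linarith)
        rw [ha, hb] at hpos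
        simp [nf, bf] at hpos
      set D := Complex.normSq a + Complex.normSq b with hD
      have := pure_mem hseg Finset.univ ![a • e + b • f, a • e + (-b) • f]
        (g := (Complex.normSq a / D) • x + (Complex.normSq b / D) • y)
        ⟨_, _, by have := Complex.normSq_nonneg a; positivity,
          by have := Complex.normSq_nonneg b; positivity, by rw [← add_div, ← hD, div_self hpos2.ne'], rfl⟩
        (by
          rw [Fin.sum_univ_two, Fin.sum_univ_two]
          ext i
          simp only [Matrix.cons_val_zero, Matrix.cons_val_one, Pi.add_apply, Pi.smul_apply, hQ, hN,
            smul_eq_mul, Complex.normSq_neg, mul_neg, neg_mul, Complex.neg_re]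
          have : (Complex.normSq a + Complex.normSq b) ≠ 0 := hpos2.ne'
          rw [hD]
          field_simp
          ring)
        (Finset.mem_univ 0) (by simpa using hpos)
      obtain ⟨s, t, hs, ht, hst, h⟩ := this
      simp only [Matrix.cons_val_zero] at h
      refine ⟨nf (a • e + b • f) * s, nf (a • e + b • f) * t, by positivity, by positivity,
        by rw [← mul_add, hst, mul_one], ?_⟩
      rw [← nf_smul_qf, ← h, smul_add, smul_smul, smul_smul]
  obtain ⟨i, hi⟩ := Function.ne_iff.1 hxy
  have hi' : y i - x i ≠ 0 := sub_ne_zero.2 (Ne.symm hi)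
  set n := bf 1 e f with hn
  obtain ⟨γ, hγ⟩ : ∃ γ : ℂ, bf (A i) e f = ((y i - x i : ℝ) : ℂ) * γ + (x i : ℂ) * n :=
    ⟨(bf (A i) e f - (x i : ℂ) * n) / ((y i - x i : ℝ) : ℂ), by
      have : ((y i - x i : ℝ) : ℂ) ≠ 0 := by exact_mod_cast hi'
      field_simp; ring⟩
  have hst : ∀ a b : ℂ, 0 ≤ Complex.normSq b + 2 * (star a * b * γ).re ∧
      0 ≤ Complex.normSq a + 2 * (star a * b * (n - γ)).re := by
    intro a b
    obtain ⟨s, t, hs, ht, h1, h2⟩ := key a b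
    have h2 := congrFun h2 i
    rw [hQ, hγ] at h2
    rw [hN] at h1
    have e1 : (star a * b * (((y i - x i : ℝ) : ℂ) * γ + (x i : ℂ) * n)).re
        = (y i - x i) * (star a * b * γ).re + x i * (star a * b * n).re := by
      rw [mul_add, mul_left_comm _ ((y i - x i : ℝ) : ℂ), mul_left_comm _ (x i : ℂ),
        Complex.add_re, Complex.re_ofReal_mul, Complex.re_ofReal_mul]
    rw [e1] at h2
    simp only [Pi.add_apply, Pi.smul_apply, smul_eq_mul] at h2
    have e2 : t = Complex.normSq b + 2 * (star a * b * γ).re := by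
      apply mul_left_cancel₀ hi'
      linear_combination x i * h1 - h2
    have e3 : s = Complex.normSq a + 2 * (star a * b * (n - γ)).re := by
      rw [mul_sub, Complex.sub_re]
      linear_combination -h1 - e2
    exact ⟨e2 ▸ ht, e3 ▸ hs⟩
  have g0 : γ = 0 := cross_zero fun a b => (hst a b).1
  have g1 : star (n - γ) = 0 := cross_zero fun a b => by
    have := (hst b a).2
    have e : star a * b * star (n - γ) = star (star b * a * (n - γ)) := by
      rw [star_mul, star_mul, star_star]; ring
    rw [e]
    exact this
  have n0 : n = 0 := by
    rw [g0, sub_zero] at g1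
    simpa using g1
  refine ⟨n0, fun j => ?_⟩
  obtain ⟨s, t, hs, ht, h1, h2⟩ := key (bf (A j) e f) 1
  have hi2 := congrFun h2 i
  have hj2 := congrFun h2 j
  rw [hQ] at hi2 hj2
  rw [hN, n0] at h1
  rw [hγ, g0, n0] at hi2
  simp only [mul_zero, add_zero, Complex.zero_re, Pi.add_apply, Pi.smul_apply, smul_eq_mul] at h1 hi2 hj2
  have et : t = Complex.normSq 1 := by
    apply mul_left_cancel₀ hi'
    linear_combination x i * h1 - hi2
  have es : s = Complex.normSq (bf (A j) e f) := by linear_combination -h1 - et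
  rw [et, es] at hj2
  have : (star (bf (A j) e f) * 1 * bf (A j) e f).re = 0 := by linarith
  rw [mul_one, show star (bf (A j) e f) * bf (A j) e f = (Complex.normSq (bf (A j) e f) : ℂ) by
    rw [Complex.normSq_eq_conj_mul_self]; rfl] at this
  exact Complex.normSq_eq_zero.1 (by exact_mod_cast this)
def Good (A : Fin 3 → Matrix (Fin 4) (Fin 4) ℂ) (X : Finset (Fin 3 → ℝ))
    (e : (Fin 3 → ℝ) → Vec) : Prop :=
  ∀ x ∈ X, ∀ y ∈ X, (bf 1 (e x) (e y) = if x = y then 1 else 0) ∧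
    ∀ i, bf (A i) (e x) (e y) = if x = y then ((x i : ℝ) : ℂ) else 0

lemma bf_diag {M : Matrix (Fin 4) (Fin 4) ℂ} {X : Finset (Fin 3 → ℝ)}
    {e : (Fin 3 → ℝ) → Vec} {d : (Fin 3 → ℝ) → ℝ}
    (h : ∀ x ∈ X, ∀ y ∈ X, bf M (e x) (e y) = if x = y then ((d x : ℝ) : ℂ) else 0)
    (c : (Fin 3 → ℝ) → ℂ) :
    (bf M (∑ x ∈ X, c x • e x) (∑ x ∈ X, c x • e x)).re = ∑ x ∈ X, Complex.normSq (c x) * d x := by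
  rw [bf_sum_left, Complex.re_sum]
  refine Finset.sum_congr rfl fun x hx => ?_
  rw [bf_sum_right, Finset.sum_eq_single x]
  · rw [bf_smul_left, bf_smul_right, h x hx x hx, if_pos rfl]
    simp [Complex.normSq_apply]
    ring
  · intro y hy hyx
    rw [bf_smul_left, bf_smul_right, h x hx y hy, if_neg (Ne.symm hyx)]
    simp
  · intro h; exact absurd hx h

lemma Good.nf {A X e} (h : Good A X e) (c : (Fin 3 → ℝ) → ℂ) :
    nf (∑ x ∈ X, c x • e x) = ∑ x ∈ X, Complex.normSq (c x) := by
  have := bf_diag (M := 1) (d := fun _ => 1) (fun x hx y hy => by simpa using (h x hx y hy).1) c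
  simp only [mul_one] at this
  exact this

lemma Good.qf {A X e} (h : Good A X e) (c : (Fin 3 → ℝ) → ℂ) :
    qf A (∑ x ∈ X, c x • e x) = ∑ x ∈ X, Complex.normSq (c x) • x := by
  ext i
  have := bf_diag (M := A i) (d := fun x => x i) (fun x hx y hy => (h x hx y hy).2 i) c
  rw [Finset.sum_apply]
  exact this

lemma Good.finrank {A X e} (h : Good A X e) :
    Module.finrank ℂ (Submodule.span ℂ (e '' (X : Set (Fin 3 → ℝ)))) = X.card := by
  have hl : LinearIndependent ℂ (fun x : X => e x) := by
    rw [Fintype.linearIndependent_iff]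
    intro g hg y
    have h1 : bf 1 (e y) (∑ x : X, g x • e x) = 0 := by rw [hg]; simp [bf]
    rw [bf_sum_right, Finset.sum_eq_single y] at h1
    · rw [bf_smul_right, (h y y.2 y y.2).1] at h1
      simpa using h1
    · intro x _ hxy
      rw [bf_smul_right, (h y y.2 x x.2).1, if_neg, mul_zero]
      intro hh; exact hxy (Subtype.ext hh.symm)
    · simp
  have := finrank_span_eq_card hl
  rw [Fintype.card_coe] at this
  have hr : e '' (X : Set (Fin 3 → ℝ)) = Set.range (fun x : X => e x) := by
    rw [Set.image_eq_range]
    rfl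
  rw [hr, this]

lemma mem_span_fun {X : Finset (Fin 3 → ℝ)} {e : (Fin 3 → ℝ) → Vec} {v : Vec}
    (hv : v ∈ Submodule.span ℂ (e '' (X : Set (Fin 3 → ℝ)))) :
    ∃ c : (Fin 3 → ℝ) → ℂ, v = ∑ x ∈ X, c x • e x := by
  classical
  rw [Submodule.mem_span_image_finset_iff_exists_fun] at hv
  obtain ⟨c, hc⟩ := hv
  refine ⟨fun x => if h : x ∈ X then c ⟨x, h⟩ else 0, ?_⟩
  rw [← hc, ← Finset.sum_coe_sort X]
  simp

lemma vert_mem {W : Set (Fin 3 → ℝ)} (hW : Convex ℝ W) {x} (hx : IsExtreme ℝ W {x})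
    {Y : Finset (Fin 3 → ℝ)} (hY : (Y : Set (Fin 3 → ℝ)) ⊆ W)
    (h : x ∈ convexHull ℝ (Y : Set (Fin 3 → ℝ))) : x ∈ Y := by
  rw [Finset.mem_convexHull'] at h
  obtain ⟨w, h0, h1, h2⟩ := h
  obtain ⟨y, hy, hy0⟩ : ∃ y ∈ Y, 0 < w y := by
    apply Finset.exists_lt_of_sum_lt
    rw [h1]; simp
  have := ext_sum hW hx Y w id h0 (fun i hi _ => hY hi) (g := x) rfl
    (by rw [h1, one_smul]; exact h2) hy hy0
  have : y = x := this
  exact this ▸ hy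

lemma inter_card {A X Y e} (hX : Tri A X) (hY : Tri A Y) (gX : Good A X e) (gY : Good A Y e)
    (hXY : X ≠ Y) : (X ∩ Y).card = 2 := by
  have hYW : (Y : Set (Fin 3 → ℝ)) ⊆ JNR A := (subset_convexHull ℝ _).trans hY.2.2.subset
  have hXW : (X : Set (Fin 3 → ℝ)) ⊆ JNR A := (subset_convexHull ℝ _).trans hX.2.2.subset
  have hle : (Submodule.span ℂ (e '' (X : Set (Fin 3 → ℝ)))) ⊓
      (Submodule.span ℂ (e '' (Y : Set (Fin 3 → ℝ)))) ≤
      Submodule.span ℂ (e '' ((X ∩ Y : Finset (Fin 3 → ℝ)) : Set (Fin 3 → ℝ))) := by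
    rintro v ⟨h1, h2⟩
    obtain ⟨c, hc⟩ := mem_span_fun h1
    obtain ⟨d, hd⟩ := mem_span_fun h2
    rw [hc]
    refine Submodule.sum_mem _ fun x hx => ?_
    by_cases hcx : c x = 0
    · rw [hcx, zero_smul]; exact Submodule.zero_mem _
    refine Submodule.smul_mem _ _ (Submodule.subset_span ⟨x, ?_, rfl⟩)
    have hcp : 0 < Complex.normSq (c x) := Complex.normSq_pos.2 hcx
    have hN1 := gX.nf c
    have hN2 := gY.nf d
    have hQ1 := gX.qf c
    have hQ2 := gY.qf d
    rw [← hc] at hN1 hQ1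
    rw [← hd] at hN2 hQ2
    have hpos : 0 < nf v := by
      rw [hN1]
      exact Finset.sum_pos' (fun _ _ => Complex.normSq_nonneg _) ⟨x, hx, hcp⟩
    have hg : (nf v)⁻¹ • qf A v ∈ convexHull ℝ (Y : Set (Fin 3 → ℝ)) := by
      rw [Finset.mem_convexHull']
      refine ⟨fun y => (nf v)⁻¹ * Complex.normSq (d y), fun y _ => ?_, ?_, ?_⟩
      · have := Complex.normSq_nonneg (d y); positivity
      · rw [← Finset.mul_sum, ← hN2, inv_mul_cancel₀ hpos.ne']
      · rw [hQ2, Finset.smul_sum]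
        simp only [mul_smul]
    have := ext_sum (JNR_convex A) hY.2.2 X (fun x => Complex.normSq (c x)) id
      (fun _ _ => Complex.normSq_nonneg _) (fun i hi _ => hXW hi) hg
      (by rw [← hN1, nf_smul_qf, hQ1]; rfl) hx hcp
    have := vert_mem (JNR_convex A) (hX.single hx) hYW this
    exact_mod_cast Finset.mem_inter.2 ⟨hx, this⟩
  have h1 := Submodule.finrank_mono hle
  have g3 : Good A (X ∩ Y) e := fun x hx y hy =>
    gX x (Finset.mem_inter.1 hx).1 y (Finset.mem_inter.1 hy).1
  rw [g3.finrank] at h1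
  have h2 := Submodule.finrank_sup_add_finrank_inf_eq
    (Submodule.span ℂ (e '' (X : Set (Fin 3 → ℝ)))) (Submodule.span ℂ (e '' (Y : Set (Fin 3 → ℝ))))
  rw [gX.finrank, gY.finrank, hX.1, hY.1] at h2
  have h3 := Submodule.finrank_le ((Submodule.span ℂ (e '' (X : Set (Fin 3 → ℝ)))) ⊔
    (Submodule.span ℂ (e '' (Y : Set (Fin 3 → ℝ)))))
  have h4 : Module.finrank ℂ Vec = 4 := by simp
  rw [h4] at h3
  have h5 : (X ∩ Y).card ≤ 3 :=
    (Finset.card_le_card Finset.inter_subset_left).trans hX.1.le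
  have h6 : (X ∩ Y).card ≠ 3 := by
    intro h
    have e1 := Finset.eq_of_subset_of_card_le (Finset.inter_subset_left : X ∩ Y ⊆ X) (by rw [h, hX.1])
    have e2 := Finset.eq_of_subset_of_card_le (Finset.inter_subset_right : X ∩ Y ⊆ Y) (by rw [h, hY.1])
    exact hXY (e1.symm.trans e2)
  omega

lemma sun_core {W : Set (Fin 3 → ℝ)} (hW : Convex ℝ W) {p q : Fin 3 → ℝ} {r : Fin 3 → Fin 3 → ℝ}
    {F : Fin 3 → Set (Fin 3 → ℝ)} (hF : ∀ j, IsExtreme ℝ W (F j)) (hc : ∀ j, Convex ℝ (F j))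
    (hp : ∀ j, p ∈ F j) (hq : ∀ j, q ∈ F j) (hr : ∀ j, r j ∈ F j) (hn : ∀ i j, i ≠ j → r i ∉ F j)
    (α β : ℝ) (c : Fin 3 → ℝ) (h1 : α + (β + ∑ k, c k) = 0)
    (h2 : α • p + (β • q + ∑ k, c k • r k) = 0) (j i : Fin 3) (hij : i ≠ j) (hi : 0 < c i)
    (hk : ∀ k, k ≠ j → 0 ≤ c k) : False := by
  classical
  set N := |α| + |β| + |c j| + 1 with hN
  have b1 := abs_nonneg α
  have b2 := abs_nonneg β
  have b3 := abs_nonneg (c j)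
  have b4 := le_abs_self α
  have b5 := le_abs_self β
  have b6 := le_abs_self (c j)
  have hNp : 0 < N := by linarith
  have hT : 0 < (N - α) + (N - β) + (N - c j) := by linarith
  set T := (N - α) + (N - β) + (N - c j) with hTd
  have hg : ((N - α) / T) • p + ((N - β) / T) • q + ((N - c j) / T) • r j ∈ F j := by
    have := (hc j).sum_mem (t := Finset.univ) (w := ![(N - α) / T, (N - β) / T, (N - c j) / T])
      (z := ![p, q, r j])
      (by
        intro k _
        fin_cases k <;> simp <;> apply div_nonneg <;> linarith)
      (by
        simp [Fin.sum_univ_three]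
        rw [← add_div, ← add_div, div_self hT.ne'])
      (by
        intro k _
        fin_cases k <;> simp [hp, hq, hr])
    simpa [Fin.sum_univ_three] using this
  have s1 : ∑ k, (if k = j then N else c k) = N - c j + ∑ k, c k := by
    rw [← Finset.add_sum_erase _ _ (Finset.mem_univ j), ← Finset.add_sum_erase _ c (Finset.mem_univ j),
      if_pos rfl, Finset.sum_congr rfl (g := c)]
    · ring
    · intro k hk
      rw [if_neg (Finset.ne_of_mem_erase hk)]
  have s2 : ∑ k, (if k = j then N else c k) • r k = (N - c j) • r j + ∑ k, c k • r k := by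
    rw [← Finset.add_sum_erase _ _ (Finset.mem_univ j),
      ← Finset.add_sum_erase _ (fun k => c k • r k) (Finset.mem_univ j),
      if_pos rfl, Finset.sum_congr rfl (g := fun k => c k • r k)]
    · module
    · intro k hk
      rw [if_neg (Finset.ne_of_mem_erase hk)]
  have := ext_sum hW (hF j) Finset.univ
    (Sum.elim (fun k => if k = j then N else c k) ![N, N]) (Sum.elim r ![p, q])
    (by
      rintro (k | k) _
      · simp only [Sum.elim_inl]
        split_ifs with h
        · exact hNp.le
        · exact hk k h
      · fin_cases k <;> simp [hNp.le])
    (by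
      rintro (k | k) _ _
      · exact (hF k).subset (hr k)
      · fin_cases k
        · exact (hF j).subset (hp j)
        · exact (hF j).subset (hq j)) hg
    (by
      have e1 : N - c j + ∑ k, c k + (N + N) = T := by rw [hTd]; linarith
      have e2 : ∑ k, c k • r k = -(α • p) - β • q := by
        linear_combination (exp := 1) h2
      simp only [Fintype.sum_sum_type, Sum.elim_inl, Sum.elim_inr, Fin.sum_univ_two,
        Matrix.cons_val_zero, Matrix.cons_val_one]
      rw [s1, s2, e1, e2, smul_add, smul_add, smul_smul, smul_smul, smul_smul,
        mul_div_cancel₀ _ hT.ne', mul_div_cancel₀ _ hT.ne', mul_div_cancel₀ _ hT.ne']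
      module)
    (Finset.mem_univ (Sum.inl i)) (by simp [hij, hi])
  exact hn i j hij this

lemma sunflower {W : Set (Fin 3 → ℝ)} (hW : Convex ℝ W) {p q : Fin 3 → ℝ} {r : Fin 3 → Fin 3 → ℝ}
    {F : Fin 3 → Set (Fin 3 → ℝ)} (hF : ∀ j, IsExtreme ℝ W (F j)) (hc : ∀ j, Convex ℝ (F j))
    (hp : ∀ j, p ∈ F j) (hq : ∀ j, q ∈ F j) (hr : ∀ j, r j ∈ F j) (hn : ∀ i j, i ≠ j → r i ∉ F j)
    (hpq : p ≠ q) : False := by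
  classical
  have hne : ∀ i : Fin 3, ∃ j, i ≠ j := by decide
  have hinj : Function.Injective r := by
    intro i j hij
    by_contra h
    exact hn i j h (hij ▸ hr j)
  have hrp : ∀ i, r i ≠ p := fun i h => by
    obtain ⟨j, hj⟩ := hne i
    exact hn i j hj (h ▸ hp j)
  have hrq : ∀ i, r i ≠ q := fun i h => by
    obtain ⟨j, hj⟩ := hne i
    exact hn i j hj (h ▸ hq j)
  have hq' : q ∉ Finset.univ.image r := by simpa using hrq
  have hp' : p ∉ insert q (Finset.univ.image r) := by simpa [hpq] using hrp
  obtain ⟨f, h2, h1, x, hx, hfx⟩ := Module.exists_nontrivial_relation_sum_zero_of_finrank_succ_lt_card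
    (R := ℝ) (t := insert p (insert q (Finset.univ.image r)))
    (by
      rw [Finset.card_insert_of_notMem hp', Finset.card_insert_of_notMem hq',
        Finset.card_image_of_injective _ hinj]
      simp)
  rw [Finset.sum_insert hp', Finset.sum_insert hq', Finset.sum_image (fun _ _ _ _ h => hinj h)] at h1 h2
  have core1 := sun_core hW hF hc hp hq hr hn (f p) (f q) (fun k => f (r k)) h1 h2
  have core2 := sun_core hW hF hc hp hq hr hn (-f p) (-f q) (fun k => -f (r k))
    (by rw [Finset.sum_neg_distrib]; linarith)
    (by simp only [neg_smul, Finset.sum_neg_distrib]; rw [← neg_add, ← neg_add, h2, neg_zero])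
  have hz : ∃ k, f (r k) ≠ 0 := by
    by_contra! hz
    simp only [hz, zero_smul, Finset.sum_const_zero, add_zero] at h1 h2
    have e : f q = -f p := by linarith
    have : f p • (p - q) = 0 := by
      rw [e] at h2
      rw [← h2]; module
    rcases smul_eq_zero.1 this with h | h
    · simp at hx
      rcases hx with rfl | rfl | ⟨k, rfl⟩
      · exact hfx h
      · exact hfx (by rw [e, h, neg_zero])
      · exact hfx (hz k)
    · exact hpq (sub_eq_zero.1 h)
  generalize hcd : (fun k => f (r k)) = c
  have hck : ∀ k, f (r k) = c k := fun k => congrFun hcd k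
  simp only [hck] at core1 core2 hz
  clear hck hcd
  have A1 : ∀ j i, i ≠ j → 0 < c i → ∃ k, k ≠ j ∧ c k < 0 := by
    intro j i h1 h2
    by_contra! h
    exact core1 j i h1 h2 h
  have A2 : ∀ j i, i ≠ j → c i < 0 → ∃ k, k ≠ j ∧ 0 < c k := by
    intro j i h1 h2
    by_contra! h
    exact core2 j i h1 (by linarith) (fun k hk => by linarith [h k hk])
  clear core1 core2
  simp only [Fin.forall_fin_succ, Fin.exists_fin_succ] at A1 A2 hz
  simp at A1 A2 hz
  grind
lemma tri_of {A : Fin 3 → Matrix (Fin 4) (Fin 4) ℂ} {F : Set (Fin 3 → ℝ)}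
    (h : IsTriangularFace (JNR A) F) :
    ∃ X : Finset (Fin 3 → ℝ), Tri A X ∧ F = convexHull ℝ (X : Set (Fin 3 → ℝ)) := by
  classical
  obtain ⟨⟨-, hext⟩, x, y, z, hai, rfl⟩ := h
  have hinj := hai.injective
  have hset : ((Finset.univ.image ![x, y, z] : Finset (Fin 3 → ℝ)) : Set (Fin 3 → ℝ)) = {x, y, z} := by
    rw [Finset.coe_image, Finset.coe_univ, Set.image_univ]
    ext w
    simp [eq_comm]
    tauto
  refine ⟨Finset.univ.image ![x, y, z], ⟨?_, ?_, ?_⟩, ?_⟩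
  · rw [Finset.card_image_of_injective _ hinj]; simp
  · intro w h1 h2
    rw [Finset.sum_image (fun _ _ _ _ h => hinj h)] at h1 h2
    have := affineIndependent_iff.1 hai Finset.univ (fun i => w (![x, y, z] i)) h1 h2
    intro v hv
    obtain ⟨i, -, rfl⟩ := Finset.mem_image.1 hv
    exact this i (Finset.mem_univ i)
  · rw [hset]; exact hext
  · rw [hset]

lemma good_of {A : Fin 3 → Matrix (Fin 4) (Fin 4) ℂ} (hA : ∀ i, (A i).IsHermitian)
    {e : (Fin 3 → ℝ) → Vec}
    (he : ∀ x, IsExtreme ℝ (JNR A) {x} → nf (e x) = 1 ∧ qf A (e x) = x)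
    {U : Finset (Fin 3 → ℝ)} (hU : ∀ x ∈ U, IsExtreme ℝ (JNR A) {x})
    (hT : ∀ x ∈ U, ∀ y ∈ U, x ≠ y → ∃ X, Tri A X ∧ x ∈ X ∧ y ∈ X) : Good A U e := by
  intro x hx y hy
  by_cases hxy : x = y
  · subst hxy
    obtain ⟨h1, h2⟩ := he x (hU x hx)
    constructor
    · rw [bf_self_real isHermitian_one, show (bf 1 (e x) (e x)).re = nf (e x) from rfl, h1]
      simp
    · intro i
      rw [bf_self_real (hA i), show (bf (A i) (e x) (e x)).re = qf A (e x) i from rfl, h2]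
      simp
  · obtain ⟨X, hX, h1, h2⟩ := hT x hx y hy hxy
    simp only [if_neg hxy]
    exact decouple hA hX h1 h2 hxy (he x (hU x hx)).1 (he y (hU y hy)).1 (he x (hU x hx)).2
      (he y (hU y hy)).2

lemma final {A : Fin 3 → Matrix (Fin 4) (Fin 4) ℂ} {U : Finset (Fin 3 → ℝ)}
    {e : (Fin 3 → ℝ) → Vec} (hg : Good A U e) (hc : U.card = 4)
    (hUW : (U : Set (Fin 3 → ℝ)) ⊆ JNR A) (hdim : convDim (JNR A) = 3) :
    ∃ v : Fin 4 → (Fin 3 → ℝ), AffineIndependent ℝ v ∧ JNR A = convexHull ℝ (Set.range v) := by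
  have htop : Submodule.span ℂ (e '' (U : Set (Fin 3 → ℝ))) = ⊤ := by
    apply Submodule.eq_top_of_finrank_eq
    rw [hg.finrank, hc]
    simp
  have hW : JNR A = convexHull ℝ (U : Set (Fin 3 → ℝ)) := by
    apply Set.Subset.antisymm
    · intro p hp
      obtain ⟨b, h1, h2⟩ := JNR_decomp A hp
      have hb : ∀ k, ∃ c : (Fin 3 → ℝ) → ℂ, b k = ∑ x ∈ U, c x • e x := fun k =>
        mem_span_fun (by rw [htop]; trivial)
      choose c hc using hb
      rw [Finset.mem_convexHull']
      refine ⟨fun x => ∑ k, Complex.normSq (c k x), fun x _ =>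
        Finset.sum_nonneg fun k _ => Complex.normSq_nonneg _, ?_, ?_⟩
      · rw [Finset.sum_comm, ← h1]
        exact Finset.sum_congr rfl fun k _ => by rw [hc k, hg.nf]
      · simp only [Finset.sum_smul]
        rw [Finset.sum_comm, ← h2]
        exact Finset.sum_congr rfl fun k _ => by rw [hc k, hg.qf]
    · exact convexHull_min hUW (JNR_convex A)
  have hr : Set.range (fun k : Fin 4 => ((U.equivFinOfCardEq hc).symm k : Fin 3 → ℝ)) = U := by
    ext x
    constructor
    · rintro ⟨k, rfl⟩
      exact ((U.equivFinOfCardEq hc).symm k).2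
    · intro hx
      exact ⟨U.equivFinOfCardEq hc ⟨x, hx⟩, by simp⟩
  refine ⟨fun k => ((U.equivFinOfCardEq hc).symm k : Fin 3 → ℝ), ?_, ?_⟩
  · rw [affineIndependent_iff_finrank_vectorSpan_eq ℝ _ (n := 3) (by simp), hr]
    rw [convDim, hW, affineSpan_convexHull, direction_affineSpan] at hdim
    exact hdim
  · rw [hr, hW]

/-- If `W` has three mutually distinct triangular faces, then `W`
is a tetrahedron. -/
theorem stmt3 (A : Fin 3 → Matrix (Fin 4) (Fin 4) ℂ)
    (hA : ∀ i, (A i).IsHermitian)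
    (hdim : convDim (JNR A) = 3)
    (F₁ F₂ F₃ : Set (Fin 3 → ℝ))
    (hF₁ : IsTriangularFace (JNR A) F₁)
    (hF₂ : IsTriangularFace (JNR A) F₂)
    (hF₃ : IsTriangularFace (JNR A) F₃)
    (h12 : F₁ ≠ F₂) (h13 : F₁ ≠ F₃) (h23 : F₂ ≠ F₃) :
    ∃ v : Fin 4 → (Fin 3 → ℝ), AffineIndependent ℝ v ∧
      JNR A = convexHull ℝ (Set.range v) := by
  classical
  obtain ⟨X₁, t1, rfl⟩ := tri_of hF₁
  obtain ⟨X₂, t2, rfl⟩ := tri_of hF₂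
  obtain ⟨X₃, t3, rfl⟩ := tri_of hF₃
  replace h12 : X₁ ≠ X₂ := fun h => h12 (by rw [h])
  replace h13 : X₁ ≠ X₃ := fun h => h13 (by rw [h])
  replace h23 : X₂ ≠ X₃ := fun h => h23 (by rw [h])
  have hex : ∀ x : Fin 3 → ℝ, ∃ e : Vec, IsExtreme ℝ (JNR A) {x} → nf e = 1 ∧ qf A e = x := by
    intro x
    by_cases h : IsExtreme ℝ (JNR A) {x}
    · obtain ⟨e, he⟩ := exists_pure h
      exact ⟨e, fun _ => he⟩
    · exact ⟨0, fun h' => absurd h' h⟩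
  choose e he using hex
  have gT : ∀ X, Tri A X → Good A X e := fun X hX =>
    good_of hA he (fun x hx => hX.single hx) fun x hx y hy _ => ⟨X, hX, hx, hy⟩
  have c12 := inter_card t1 t2 (gT _ t1) (gT _ t2) h12
  have c13 := inter_card t1 t3 (gT _ t1) (gT _ t3) h13
  have c23 := inter_card t2 t3 (gT _ t2) (gT _ t3) h23
  have hU : (X₁ ∪ X₂).card = 4 := by
    have := Finset.card_union_add_card_inter X₁ X₂
    rw [c12, t1.1, t2.1] at this
    omega
  by_cases hsub : X₃ ⊆ X₁ ∪ X₂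
  · have hsingle : ∀ x ∈ X₁ ∪ X₂, IsExtreme ℝ (JNR A) {x} := fun x hx => by
      rcases Finset.mem_union.1 hx with h | h
      · exact t1.single h
      · exact t2.single h
    refine final (good_of hA he hsingle ?_) hU (fun x hx => (hsingle x hx).subset rfl) hdim
    intro x hx y hy hxy
    by_contra hcon
    have hno : ∀ X, Tri A X → X ⊆ X₁ ∪ X₂ → X = (X₁ ∪ X₂).erase x ∨ X = (X₁ ∪ X₂).erase y := by
      intro X hX hXU
      by_cases hxX : x ∈ X
      · right
        refine Finset.eq_of_subset_of_card_le (Finset.subset_erase.2 ⟨hXU, fun h => ?_⟩) ?_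
        · exact hcon ⟨X, hX, hxX, h⟩
        · rw [Finset.card_erase_of_mem hy, hU, hX.1]
      · left
        refine Finset.eq_of_subset_of_card_le (Finset.subset_erase.2 ⟨hXU, hxX⟩) ?_
        rw [Finset.card_erase_of_mem hx, hU, hX.1]
    have n1 := hno _ t1 Finset.subset_union_left
    have n2 := hno _ t2 Finset.subset_union_right
    have n3 := hno _ t3 hsub
    rcases n1 with n1 | n1 <;> rcases n2 with n2 | n2 <;> rcases n3 with n3 | n3 <;>
      first
      | exact h12 (n1.trans n2.symm)
      | exact h13 (n1.trans n3.symm)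
      | exact h23 (n2.trans n3.symm)
  · exfalso
    obtain ⟨r3, hr3, hr3U⟩ := Finset.not_subset.1 hsub
    have hr31 : r3 ∉ X₁ := fun h => hr3U (Finset.mem_union_left _ h)
    have hr32 : r3 ∉ X₂ := fun h => hr3U (Finset.mem_union_right _ h)
    have e1 : X₁ ∩ X₃ = X₃.erase r3 := by
      refine Finset.eq_of_subset_of_card_le (Finset.subset_erase.2
        ⟨Finset.inter_subset_right, fun h => hr31 (Finset.mem_inter.1 h).1⟩) ?_
      rw [Finset.card_erase_of_mem hr3, t3.1, c13]
    have e2 : X₂ ∩ X₃ = X₃.erase r3 := by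
      refine Finset.eq_of_subset_of_card_le (Finset.subset_erase.2
        ⟨Finset.inter_subset_right, fun h => hr32 (Finset.mem_inter.1 h).1⟩) ?_
      rw [Finset.card_erase_of_mem hr3, t3.1, c23]
    obtain ⟨p, q, hpq, hX⟩ := Finset.card_eq_two.1 c13
    have hp : p ∈ X₁ ∩ X₃ := by rw [hX]; simp
    have hq : q ∈ X₁ ∩ X₃ := by rw [hX]; simp
    have hp2 : p ∈ X₂ ∩ X₃ := by rw [e2, ← e1]; exact hp
    have hq2 : q ∈ X₂ ∩ X₃ := by rw [e2, ← e1]; exact hq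
    rw [Finset.mem_inter] at hp hq hp2 hq2
    have hss : ∀ X Y : Finset (Fin 3 → ℝ), Tri A X → Tri A Y → X ≠ Y → ∃ r ∈ X, r ∉ Y := by
      intro X Y hX hY hXY
      by_contra! h
      exact hXY (Finset.eq_of_subset_of_card_le h (by rw [hX.1, hY.1]))
    obtain ⟨r1, hr1, hr12⟩ := hss _ _ t1 t2 h12
    obtain ⟨r2, hr2, hr21⟩ := hss _ _ t2 t1 (Ne.symm h12)
    have hr13 : r1 ∉ X₃ := fun h => by
      have : r1 ∈ X₁ ∩ X₃ := Finset.mem_inter.2 ⟨hr1, h⟩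
      rw [e1, ← e2] at this
      exact hr12 (Finset.mem_inter.1 this).1
    have hr23 : r2 ∉ X₃ := fun h => by
      have : r2 ∈ X₂ ∩ X₃ := Finset.mem_inter.2 ⟨hr2, h⟩
      rw [e2, ← e1] at this
      exact hr21 (Finset.mem_inter.1 this).1
    have hT : ∀ j, Tri A ((![X₁, X₂, X₃] : Fin 3 → Finset (Fin 3 → ℝ)) j) := by
      intro j; fin_cases j <;> assumption
    have hrm : ∀ j, (![r1, r2, r3] : Fin 3 → Fin 3 → ℝ) j ∈
        (![X₁, X₂, X₃] : Fin 3 → Finset (Fin 3 → ℝ)) j := by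
      intro j; fin_cases j <;> assumption
    have hrn : ∀ i j, i ≠ j → (![r1, r2, r3] : Fin 3 → Fin 3 → ℝ) i ∉
        (![X₁, X₂, X₃] : Fin 3 → Finset (Fin 3 → ℝ)) j := by
      intro i j hij; fin_cases i <;> fin_cases j <;> first | exact absurd rfl hij | assumption
    refine sunflower (JNR_convex A) (p := p) (q := q) (r := ![r1, r2, r3])
      (F := fun j => convexHull ℝ ((![X₁, X₂, X₃] : Fin 3 → Finset (Fin 3 → ℝ)) j : Set (Fin 3 → ℝ)))
      (fun j => (hT j).2.2) (fun j => convex_convexHull ℝ _) (fun j => subset_convexHull ℝ _ ?_)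
      (fun j => subset_convexHull ℝ _ ?_) (fun j => subset_convexHull ℝ _ (hrm j))
      (fun i j hij h => hrn i j hij (vert_mem (JNR_convex A) ((hT i).single (hrm i))
        ((subset_convexHull ℝ _).trans (hT j).2.2.subset) h)) hpq
    · fin_cases j
      · exact hp.1
      · exact hp2.1
      · exact hp.2
    · fin_cases j
      · exact hq.1
      · exact hq2.1
      · exact hq.2
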